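/- Let ρ > 1 be a real number and define the power cone of exponent ω ∈ (0,1) as K_ω = {(a,b,c) ∈ ℝ³ : a ≥ 0, b ≥ 0, a^ω · b^(1-ω) ≥ |c|}. For real w ≥ 0, real x, and y ∈ {0,1}, the triple (w, y, x) belongs to K_{1/ρ} if and only if either (y = 0 and x = 0) or (y = 1 and w ≥ |x|^ρ). -/

import Mathlib

/-- The power cone of exponent `ω`: triples `(a, b, c)` with `a ≥ 0`, `b ≥ 0` and
`a ^ ω * b ^ (1 - ω) ≥ |c|`, where powers are real powers. -/
def powerCone (ω : ℝ) : Set (ℝ × ℝ × ℝ) :=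
  {p | 0 ≤ p.1 ∧ 0 ≤ p.2.1 ∧ p.1 ^ ω * p.2.1 ^ (1 - ω) ≥ |p.2.2|}

theorem stmt_2 (ρ : ℝ) (hρ : 1 < ρ) (w x y : ℝ) (hw : 0 ≤ w) (hy : y = 0 ∨ y = 1) :
    (w, y, x) ∈ powerCone (1 / ρ) ↔ (y = 0 ∧ x = 0) ∨ (y = 1 ∧ w ≥ |x| ^ ρ) := by
  rcases hy with rfl | rfl
  -- `1 - 1 / ρ` is nonzero, so `0 ^ (1 - 1 / ρ) = 0` and the cone inequality reads `|x| ≤ 0`.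
  · have hne : 1 - 1 / ρ ≠ 0 := (sub_pos.mpr ((div_lt_one (by linarith)).mpr hρ)).ne'
    simp only [powerCone, Set.mem_ofPred_eq, Real.zero_rpow hne, mul_zero, ge_iff_le,
      abs_nonpos_iff]
    simp [hw]
  -- The cone inequality reads `|x| ≤ w ^ (1 / ρ)`; raise both sides to the power `ρ`.
  · simp only [powerCone, Set.mem_ofPred_eq, Real.one_rpow, mul_one, ge_iff_le, one_div,
      Real.le_rpow_inv_iff_of_pos (abs_nonneg x) hw (by linarith : 0 < ρ)]
    simp [hw]
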